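/- (Finite-volume L² transport bound) For every s ∈ (−2, −1] and β > 0 there exists a constant C = C(s, β) > 0 such that for every integer n ≥ 1, the expected squared transport cost from the Gibbs configuration to the centered unit lattice is at most linear in the volume: E_{P_n^{(s,β)}}[∑_{j=1}^n (x_{(j)} − y_j)²] ≤ C n. -/

import Mathlib

open MeasureTheory Real

/-- The box `□ₙ = [−n/2, n/2] ⊂ ℝ`. -/
noncomputable def box (n : ℕ) : Set ℝ := Set.Icc (-(n : ℝ) / 2) ((n : ℝ) / 2)

/-- The background-neutralized energy `H_{n,g}` of the configuration `x ∈ (□ₙ)ⁿ`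
for the pairwise kernel `g`. -/
noncomputable def Hgen (n : ℕ) (g : ℝ → ℝ) (x : Fin n → ℝ) : ℝ :=
  (1 / 2) * ∑ i : Fin n, ∑ j : Fin n, g (x i - x j)
    - ∑ i : Fin n, ∫ y in box n, g (x i - y)
    + (1 / 2) * ∫ u in box n, ∫ v in box n, g (u - v)

/-- The non-singular Riesz kernel `g_s(t) = −|t|^{−s}` (with `g_s 0 = 0`),
for `−2 < s < 0`. -/
noncomputable def rieszKernel (s t : ℝ) : ℝ := -(|t| ^ (-s))

/-- The `j`-th particle of the centered unit lattice in `□ₙ`, `y_j = j − (n+1)/2`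
(here `j : Fin n` is `0`-based, so the `1`-based index is `j+1`). -/
noncomputable def latticeY (n : ℕ) (j : Fin n) : ℝ := ((j : ℝ) + 1) - ((n : ℝ) + 1) / 2

/-- The partition function `Z_n^{(s,β)} = n^{−n} ∫_{(□ₙ)ⁿ} exp(−β H_n^{(s)}(x)) dx`. -/
noncomputable def Zpart (s β : ℝ) (n : ℕ) : ℝ :=
  ((n : ℝ) ^ n)⁻¹ *
    ∫ x in Set.univ.pi (fun _ : Fin n => box n),
      Real.exp (-β * Hgen n (rieszKernel s) x)

/-!
Every Riesz kernel with `-2 < s ≤ -1` is a mixture of features: up to a positive factor,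
`-|u - v|^{-s}` is minus the integral over `θ` of `(φ_θ(u) - φ_θ(v))²`, so by neutrality the energy
is the integral of the squared fluctuations of the linear statistics of the `φ_θ`. For `s = -1` the
features are unit steps; for `s < -1` they are ramps of all widths. The ramps of width at most one
resolve a unit step up to a bounded error per unit length, so the Coulomb energy (`s = -1`) is at
most `O(n)` plus a multiple of the energy for `s`.

The Coulomb energy is in turn *equal* to the transport cost plus `n / 12`. It remains to bound the
mean energy under the Gibbs measure. Jensen's inequality reduces this to a lower bound on the
partition function, obtained by placing one uniform point in each unit cell of the box, in any of
the `n!` orders: such a configuration has mean energy at most `n / 2`.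
-/

/-! ### Linear statistics and neutralized energies -/

/-- The fluctuation `∑ᵢ φ(xᵢ) − ∫_{□ₙ} φ` of the linear statistic of `φ` against the uniform
background. -/
noncomputable def fluctuation (n : ℕ) (φ : ℝ → ℝ) (x : Fin n → ℝ) : ℝ :=
  ∑ i, φ (x i) - ∫ y in box n, φ y

/-- The background-neutralized energy of `x` for a pair kernel `K`, not necessarily translation
invariant. -/
noncomputable def neutralEnergy (n : ℕ) (K : ℝ → ℝ → ℝ) (x : Fin n → ℝ) : ℝ :=
  (1 / 2) * ∑ i, ∑ j, K (x i) (x j) - (∑ i, ∫ y in box n, K (x i) y)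
    + (1 / 2) * ∫ p in box n ×ˢ box n, K p.1 p.2

/-- The energy `H_n^{(s)}`. In `Hgen` the scope of the `∫` in the second term includes the last one,
so `Hgen` differs from this by a constant, which the Gibbs measure does not see. -/
noncomputable def rieszEnergy (s : ℝ) (n : ℕ) (x : Fin n → ℝ) : ℝ :=
  neutralEnergy n (fun u v => rieszKernel s (u - v)) x

lemma measurableSet_box (n : ℕ) : MeasurableSet (box n) := measurableSet_Icc

lemma isCompact_box (n : ℕ) : IsCompact (box n) := isCompact_Icc

lemma volume_box (n : ℕ) : volume (box n) = n := by
  rw [box, Real.volume_Icc, neg_div, sub_neg_eq_add, add_halves, ENNReal.ofReal_natCast]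

instance isFiniteMeasure_restrict_box (n : ℕ) : IsFiniteMeasure (volume.restrict (box n)) :=
  ⟨by simp [volume_box]⟩

lemma setIntegral_box_const (n : ℕ) (c : ℝ) : ∫ _ in box n, c = n * c := by
  simp [Measure.real, volume_box]

lemma integrableOn_box_of_continuous (n : ℕ) {f : ℝ → ℝ} (hf : Continuous f) :
    IntegrableOn f (box n) :=
  hf.continuousOn.integrableOn_compact (isCompact_box n)

lemma integrableOn_box_prod_of_continuous (n : ℕ) {f : ℝ × ℝ → ℝ} (hf : Continuous f) :
    IntegrableOn f (box n ×ˢ box n) :=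
  hf.continuousOn.integrableOn_compact ((isCompact_box n).prod (isCompact_box n))

lemma restrict_box_prod (n : ℕ) :
    (volume.restrict (box n ×ˢ box n) : Measure (ℝ × ℝ)) =
      (volume.restrict (box n)).prod (volume.restrict (box n)) := by
  rw [Measure.prod_restrict, Measure.volume_eq_prod]

lemma exists_Hgen_eq_neutralEnergy_add (n : ℕ) {g : ℝ → ℝ} (hg : Continuous g) :
    ∃ c : ℝ, ∀ x, Hgen n g x = neutralEnergy n (fun u v => g (u - v)) x + c := by
  obtain ⟨I, hI⟩ : ∃ I, ∫ u in box n, ∫ v in box n, g (u - v) = I := ⟨_, rfl⟩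
  have hI' : ∫ p in box n ×ˢ box n, g (p.1 - p.2) = I :=
    (setIntegral_prod _ (integrableOn_box_prod_of_continuous n (by fun_prop))).trans hI
  have hsplit (a c : ℝ) : ∫ y in box n, (g (a - y) + c) = (∫ y in box n, g (a - y)) + n * c := by
    rw [integral_add (integrableOn_box_of_continuous n (by fun_prop)) (integrable_const _),
      setIntegral_box_const]
  refine ⟨-(n * (n * (1 / 2 * I)) + 1 / 2 * I), fun x => ?_⟩
  simp only [Hgen, neutralEnergy, hI, hI', hsplit, Finset.sum_add_distrib, Finset.sum_const,
    Finset.card_univ, Fintype.card_fin, nsmul_eq_mul]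
  ring

lemma continuous_neutralEnergy (n : ℕ) {K : ℝ → ℝ → ℝ} (hK : Continuous (Function.uncurry K)) :
    Continuous (neutralEnergy n K) := by
  have hbackground (i : Fin n) : Continuous fun x : Fin n → ℝ => ∫ y in box n, K (x i) y :=
    (continuous_parametric_integral_of_continuous hK (isCompact_box n)).comp (continuous_apply i)
  unfold neutralEnergy
  fun_prop

lemma neutralEnergy_const_mul (n : ℕ) (c : ℝ) (K : ℝ → ℝ → ℝ) (x : Fin n → ℝ) :
    neutralEnergy n (fun u v => c * K u v) x = c * neutralEnergy n K x := by
  simp only [neutralEnergy, integral_const_mul, ← Finset.mul_sum]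
  ring

lemma sum_sum_sq_sub {ι : Type*} [Fintype ι] (a : ι → ℝ) :
    ∑ i, ∑ j, (a i - a j) ^ 2 = 2 * Fintype.card ι * ∑ i, a i ^ 2 - 2 * (∑ i, a i) ^ 2 := by
  simp only [sub_sq, Finset.sum_add_distrib, Finset.sum_sub_distrib, Finset.sum_const,
    Finset.card_univ, nsmul_eq_mul, ← Finset.mul_sum, ← Finset.sum_mul]
  ring

lemma integral_prod_sq_sub {Ω : Type*} [MeasurableSpace Ω] {ν : Measure Ω} [IsFiniteMeasure ν]
    {φ : Ω → ℝ} (h₁ : Integrable φ ν) (h₂ : Integrable (fun u => φ u ^ 2) ν) :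
    ∫ p, (φ p.1 - φ p.2) ^ 2 ∂ν.prod ν =
      2 * ν.real Set.univ * ∫ u, φ u ^ 2 ∂ν - 2 * (∫ u, φ u ∂ν) ^ 2 := by
  have hsq₁ : Integrable (fun p : Ω × Ω => φ p.1 ^ 2) (ν.prod ν) := h₂.comp_fst ν
  have hsq₂ : Integrable (fun p : Ω × Ω => φ p.2 ^ 2) (ν.prod ν) := h₂.comp_snd ν
  have hmul : Integrable (fun p : Ω × Ω => 2 * (φ p.1 * φ p.2)) (ν.prod ν) :=
    (h₁.mul_prod h₁).const_mul 2
  simp_rw [sub_sq, mul_assoc]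
  have hdiff : Integrable (fun p : Ω × Ω => φ p.1 ^ 2 - 2 * (φ p.1 * φ p.2)) (ν.prod ν) :=
    hsq₁.sub hmul
  rw [integral_add hdiff hsq₂, integral_sub hsq₁ hmul, integral_const_mul,
    integral_prod_mul, integral_fun_fst (fun u => φ u ^ 2), integral_fun_snd (fun u => φ u ^ 2)]
  simp only [smul_eq_mul]
  ring

lemma setIntegral_box_sq_sub {n : ℕ} {φ : ℝ → ℝ} (h₁ : IntegrableOn φ (box n))
    (h₂ : IntegrableOn (fun u => φ u ^ 2) (box n)) (c : ℝ) :
    ∫ y in box n, (c - φ y) ^ 2 =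
      n * c ^ 2 - 2 * c * (∫ y in box n, φ y) + ∫ y in box n, φ y ^ 2 := by
  simp_rw [sub_sq]
  have hmul : IntegrableOn (fun y => 2 * c * φ y) (box n) := h₁.const_mul _
  have hdiff : IntegrableOn (fun y => c ^ 2 - 2 * c * φ y) (box n) :=
    (integrable_const _).sub hmul
  rw [integral_add hdiff h₂, integral_sub (integrable_const _) hmul,
    integral_const_mul, setIntegral_box_const]

-- The multiples of `∫ φ²` and of `∑ᵢ φ(xᵢ)²` cancel because there are as many particles as units
-- of length: this is where neutrality enters.
lemma neutralEnergy_sq_sub {n : ℕ} {φ : ℝ → ℝ} (h₁ : IntegrableOn φ (box n))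
    (h₂ : IntegrableOn (fun u => φ u ^ 2) (box n)) (x : Fin n → ℝ) :
    neutralEnergy n (fun u v => (φ u - φ v) ^ 2) x = -fluctuation n φ x ^ 2 := by
  have hvol : (volume.restrict (box n)).real Set.univ = n := by simp [Measure.real, volume_box]
  simp only [neutralEnergy, fluctuation, restrict_box_prod, integral_prod_sq_sub h₁ h₂, hvol,
    sum_sum_sq_sub, Fintype.card_fin, setIntegral_box_sq_sub h₁ h₂, Finset.sum_add_distrib,
    Finset.sum_sub_distrib, ← Finset.mul_sum, ← Finset.sum_mul, Finset.sum_const, Finset.card_univ,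
    nsmul_eq_mul]
  ring

section Mixture

variable {Ω : Type*} [MeasurableSpace Ω] {μ : Measure Ω}

lemma integrable_uncurry_of_nonneg [SFinite μ] {E : Type*} [MeasurableSpace E] {ν : Measure E}
    [SFinite ν] {f : Ω → E → ℝ} (hf : Measurable (Function.uncurry f)) (h0 : ∀ θ e, 0 ≤ f θ e)
    (hθ : ∀ e, Integrable (fun θ => f θ e) μ)
    (hE : Integrable (fun e => ∫ θ, f θ e ∂μ) ν) :
    Integrable (Function.uncurry f) (μ.prod ν) := by
  rw [integrable_prod_iff' hf.aestronglyMeasurable]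
  exact ⟨.of_forall hθ, by simpa [Function.uncurry, abs_of_nonneg (h0 _ _)] using hE⟩

/-- The features `Φ_θ`, mixed by `μ`, resolve the pair function `K`; the energy of `-K` is then the
mixture of the squared fluctuations of the `Φ_θ`. -/
structure IsFeatureMap (Φ : Ω → ℝ → ℝ) (μ : Measure Ω) (K : ℝ → ℝ → ℝ) : Prop where
  measurable : Measurable (Function.uncurry Φ)
  bounded : ∀ θ, ∃ M, ∀ u, |Φ θ u| ≤ M
  integrable : ∀ u v, Integrable (fun θ => (Φ θ u - Φ θ v) ^ 2) μ
  integral_eq : ∀ u v, ∫ θ, (Φ θ u - Φ θ v) ^ 2 ∂μ = K u v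

namespace IsFeatureMap

variable {Φ : Ω → ℝ → ℝ} {K : ℝ → ℝ → ℝ}

lemma neutralEnergy_eq (hΦ : IsFeatureMap Φ μ K) (θ : Ω) (n : ℕ) (x : Fin n → ℝ) :
    neutralEnergy n (fun u v => (Φ θ u - Φ θ v) ^ 2) x = -fluctuation n (Φ θ) x ^ 2 := by
  obtain ⟨M, hM⟩ := hΦ.bounded θ
  have hmeas : Measurable (Φ θ) := hΦ.measurable.of_uncurry_left
  have hmem : MemLp (Φ θ) 2 (volume.restrict (box n)) :=
    .of_bound hmeas.aestronglyMeasurable M (.of_forall hM)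
  exact neutralEnergy_sq_sub (hmem.integrable one_le_two) hmem.integrable_sq x

variable [SFinite μ]

lemma integrable_background (hΦ : IsFeatureMap Φ μ K) (hK : Continuous (Function.uncurry K))
    (n : ℕ) (u : ℝ) :
    Integrable (Function.uncurry fun θ v => (Φ θ u - Φ θ v) ^ 2)
      (μ.prod (volume.restrict (box n))) := by
  have hΦm := hΦ.measurable
  refine integrable_uncurry_of_nonneg ?_ (fun _ _ => sq_nonneg _) (hΦ.integrable u) ?_
  · exact ((hΦm.comp (measurable_fst.prodMk measurable_const)).sub hΦm).pow_const 2
  · simp only [hΦ.integral_eq]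
    exact integrableOn_box_of_continuous n (hK.comp (by fun_prop : Continuous fun v => (u, v)))

lemma integrable_background_prod (hΦ : IsFeatureMap Φ μ K) (hK : Continuous (Function.uncurry K))
    (n : ℕ) :
    Integrable (Function.uncurry fun θ (p : ℝ × ℝ) => (Φ θ p.1 - Φ θ p.2) ^ 2)
      (μ.prod (volume.restrict (box n ×ˢ box n))) := by
  have hΦm := hΦ.measurable
  refine integrable_uncurry_of_nonneg ?_ (fun _ _ => sq_nonneg _)
    (fun p => hΦ.integrable p.1 p.2) ?_
  · exact ((hΦm.comp (by fun_prop : Measurable fun q : Ω × ℝ × ℝ => (q.1, q.2.1))).sub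
      (hΦm.comp (by fun_prop : Measurable fun q : Ω × ℝ × ℝ => (q.1, q.2.2)))).pow_const 2
  · simp only [hΦ.integral_eq]
    exact integrableOn_box_prod_of_continuous n hK

lemma hasIntegral_neutralEnergy (hΦ : IsFeatureMap Φ μ K) (hK : Continuous (Function.uncurry K))
    (n : ℕ) (x : Fin n → ℝ) :
    Integrable (fun θ => neutralEnergy n (fun u v => (Φ θ u - Φ θ v) ^ 2) x) μ ∧
      ∫ θ, neutralEnergy n (fun u v => (Φ θ u - Φ θ v) ^ 2) x ∂μ = neutralEnergy n K x := by
  have hpairs (i : Fin n) : Integrable (fun θ => ∑ j, (Φ θ (x i) - Φ θ (x j)) ^ 2) μ :=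
    integrable_finsetSum _ fun j _ => hΦ.integrable _ _
  have hpoints : Integrable (fun θ => 1 / 2 * ∑ i, ∑ j, (Φ θ (x i) - Φ θ (x j)) ^ 2) μ :=
    (integrable_finsetSum _ fun i _ => hpairs i).const_mul _
  have hmixed (i : Fin n) := hΦ.integrable_background hK n (x i)
  have hbackground (i : Fin n) :
      Integrable (fun θ => ∫ y in box n, (Φ θ (x i) - Φ θ y) ^ 2) μ :=
    (hmixed i).integral_prod_left
  have hbackgroundSum : Integrable (fun θ => ∑ i, ∫ y in box n, (Φ θ (x i) - Φ θ y) ^ 2) μ :=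
    integrable_finsetSum _ fun i _ => hbackground i
  have hbox := hΦ.integrable_background_prod hK n
  have hboxHalf : Integrable
      (fun θ => 1 / 2 * ∫ p in box n ×ˢ box n, (Φ θ p.1 - Φ θ p.2) ^ 2) μ :=
    hbox.integral_prod_left.const_mul _
  have hdiff : Integrable (fun θ => 1 / 2 * ∑ i, ∑ j, (Φ θ (x i) - Φ θ (x j)) ^ 2 -
      ∑ i, ∫ y in box n, (Φ θ (x i) - Φ θ y) ^ 2) μ := hpoints.sub hbackgroundSum
  refine ⟨hdiff.add hboxHalf, ?_⟩
  unfold neutralEnergy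
  rw [integral_add hdiff hboxHalf, integral_sub hpoints hbackgroundSum,
    integral_const_mul, integral_const_mul, integral_finsetSum _ fun i _ => hpairs i,
    integral_finsetSum _ fun i _ => hbackground i, integral_integral_swap hbox]
  simp_rw [integral_finsetSum _ fun _ _ => hΦ.integrable _ _, integral_integral_swap (hmixed _),
    hΦ.integral_eq]

lemma integrable_fluctuation_sq (hΦ : IsFeatureMap Φ μ K) (hK : Continuous (Function.uncurry K))
    (n : ℕ) (x : Fin n → ℝ) : Integrable (fun θ => fluctuation n (Φ θ) x ^ 2) μ := by
  simpa only [hΦ.neutralEnergy_eq, neg_neg] using (hΦ.hasIntegral_neutralEnergy hK n x).1.fun_neg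

lemma integral_fluctuation_sq (hΦ : IsFeatureMap Φ μ K) (hK : Continuous (Function.uncurry K))
    (n : ℕ) (x : Fin n → ℝ) :
    ∫ θ, fluctuation n (Φ θ) x ^ 2 ∂μ = -neutralEnergy n K x := by
  rw [← (hΦ.hasIntegral_neutralEnergy hK n x).2]
  simp only [hΦ.neutralEnergy_eq, integral_neg, neg_neg]

end IsFeatureMap

end Mixture

/-! ### Steps and ramps as features of the Riesz kernels -/

lemma continuous_rieszKernel {s : ℝ} (hs : s ≤ 0) : Continuous (rieszKernel s) :=
  (continuous_abs.rpow_const fun _ => .inr (neg_nonneg.2 hs)).neg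

lemma continuous_uncurry_rieszKernel_sub {s : ℝ} (hs : s ≤ 0) :
    Continuous (Function.uncurry fun u v : ℝ => rieszKernel s (u - v)) :=
  (continuous_rieszKernel hs).comp (by fun_prop : Continuous fun p : ℝ × ℝ => p.1 - p.2)

lemma continuous_rieszEnergy {s : ℝ} (hs : s ≤ 0) (n : ℕ) : Continuous (rieszEnergy s n) :=
  continuous_neutralEnergy n (continuous_uncurry_rieszKernel_sub hs)

lemma continuous_const_mul_abs_sub_rpow (c : ℝ) {α : ℝ} (hα : 0 ≤ α) :
    Continuous (Function.uncurry fun u v : ℝ => c * |u - v| ^ α) :=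
  ((by fun_prop : Continuous fun p : ℝ × ℝ => |p.1 - p.2|).rpow_const
    fun _ => .inr hα).const_mul c

section RieszFeatures

variable {Ω : Type*} [MeasurableSpace Ω] {μ : Measure Ω} [SFinite μ] {Φ : Ω → ℝ → ℝ} {c α : ℝ}

lemma integrable_fluctuation_sq_of_riesz (hα : 0 ≤ α)
    (hΦ : IsFeatureMap Φ μ fun u v => c * |u - v| ^ α) (n : ℕ) (x : Fin n → ℝ) :
    Integrable (fun θ => fluctuation n (Φ θ) x ^ 2) μ :=
  hΦ.integrable_fluctuation_sq (continuous_const_mul_abs_sub_rpow c hα) n x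

lemma integral_fluctuation_sq_of_riesz (hα : 0 ≤ α)
    (hΦ : IsFeatureMap Φ μ fun u v => c * |u - v| ^ α) (n : ℕ) (x : Fin n → ℝ) :
    ∫ θ, fluctuation n (Φ θ) x ^ 2 ∂μ = c * rieszEnergy (-α) n x := by
  rw [hΦ.integral_fluctuation_sq (continuous_const_mul_abs_sub_rpow c hα), rieszEnergy,
    ← neutralEnergy_const_mul, ← neg_one_mul, ← neutralEnergy_const_mul]
  simp only [rieszKernel, neg_neg, neg_one_mul, mul_neg]

end RieszFeatures

/-- The indicator function of `(t, ∞)`. -/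
noncomputable def unitStep (t u : ℝ) : ℝ := if t < u then 1 else 0

/-- The discrepancy at `t`: the number of particles beyond `t` minus the length of the box beyond
`t`. -/
noncomputable def discrepancy (n : ℕ) (x : Fin n → ℝ) (t : ℝ) : ℝ :=
  fluctuation n (unitStep t) x

lemma measurable_uncurry_unitStep : Measurable (Function.uncurry unitStep) :=
  .ite (measurableSet_lt measurable_fst measurable_snd) measurable_const measurable_const

lemma abs_unitStep_le_one (t u : ℝ) : |unitStep t u| ≤ 1 := by
  unfold unitStep
  split_ifs <;> simp

lemma sq_unitStep_sub (u v : ℝ) :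
    (fun t => (unitStep t u - unitStep t v) ^ 2) =
      (Set.Ico (min u v) (max u v)).indicator fun _ => 1 := by
  funext t
  simp only [unitStep, Set.indicator, Set.mem_Ico, min_le_iff, lt_max_iff]
  split_ifs <;> grind

lemma isFeatureMap_unitStep :
    IsFeatureMap unitStep volume fun u v => 1 * |u - v| ^ (1 : ℝ) where
  measurable := measurable_uncurry_unitStep
  bounded t := ⟨1, abs_unitStep_le_one t⟩
  integrable u v := by
    rw [sq_unitStep_sub]
    exact (integrable_indicator_iff measurableSet_Ico).2 (integrableOn_const (by simp))
  integral_eq u v := by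
    rw [sq_unitStep_sub, integral_indicator measurableSet_Ico]
    simp [max_sub_min_eq_abs']

lemma integrable_discrepancy_sq (n : ℕ) (x : Fin n → ℝ) :
    Integrable fun t => discrepancy n x t ^ 2 :=
  integrable_fluctuation_sq_of_riesz zero_le_one isFeatureMap_unitStep n x

lemma integral_discrepancy_sq (n : ℕ) (x : Fin n → ℝ) :
    ∫ t, discrepancy n x t ^ 2 = rieszEnergy (-1) n x :=
  (integral_fluctuation_sq_of_riesz zero_le_one isFeatureMap_unitStep n x).trans (one_mul _)

/-- The ramp that vanishes up to `t`, has slope one on `[t, t + l]` and equals `l` from there on. -/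
noncomputable def ramp (l t u : ℝ) : ℝ := max 0 (min l (u - t))

/-- The squared `L²` distance, in the position of the ramp, between the values of ramps of height
`l` at `u` and at `v`. -/
noncomputable def rampDist (l u v : ℝ) : ℝ := ∫ t, (ramp l t u - ramp l t v) ^ 2

lemma continuous_ramp_sub_sq (u v : ℝ) :
    Continuous fun p : ℝ × ℝ => (ramp p.1 p.2 u - ramp p.1 p.2 v) ^ 2 := by
  unfold ramp
  fun_prop

lemma ramp_nonneg (l t u : ℝ) : 0 ≤ ramp l t u := le_max_left _ _

lemma ramp_le {l : ℝ} (hl : 0 ≤ l) (t u : ℝ) : ramp l t u ≤ l := max_le hl (min_le_left _ _)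

lemma ramp_of_le {l t u : ℝ} (h : u ≤ t) : ramp l t u = 0 :=
  max_eq_left ((min_le_right _ _).trans (sub_nonpos.2 h))

lemma ramp_of_add_le {l t u : ℝ} (hl : 0 ≤ l) (h : t + l ≤ u) : ramp l t u = l := by
  rw [ramp, min_eq_left (by linarith), max_eq_right hl]

lemma abs_ramp_sub_ramp_le {l : ℝ} (hl : 0 ≤ l) (t u v : ℝ) :
    |ramp l t u - ramp l t v| ≤ min |u - v| l := by
  refine le_min ?_ (abs_sub_le_of_nonneg_of_le (ramp_nonneg _ _ _) (ramp_le hl t u)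
    (ramp_nonneg _ _ _) (ramp_le hl t v))
  calc |ramp l t u - ramp l t v| ≤ |min l (u - t) - min l (v - t)| := by
        simpa [ramp] using abs_max_sub_max_le_max 0 (min l (u - t)) 0 (min l (v - t))
    _ ≤ |u - v| := by simpa using abs_min_sub_min_le_max l (u - t) l (v - t)

lemma sq_ramp_sub_ramp_le {l : ℝ} (hl : 0 ≤ l) (t u v : ℝ) :
    (ramp l t u - ramp l t v) ^ 2 ≤
      (Set.Icc (min u v - l) (max u v)).indicator (fun _ => min |u - v| l ^ 2) t := by
  by_cases ht : t ∈ Set.Icc (min u v - l) (max u v)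
  · rw [Set.indicator_of_mem ht, ← sq_abs]
    gcongr
    exact abs_ramp_sub_ramp_le hl t u v
  · have heq : ramp l t u = ramp l t v := by
      rw [Set.mem_Icc, not_and_or, not_le, not_le, lt_sub_iff_add_lt, lt_min_iff, max_lt_iff] at ht
      rcases ht with ht | ht
      · rw [ramp_of_add_le hl ht.1.le, ramp_of_add_le hl ht.2.le]
      · rw [ramp_of_le ht.1.le, ramp_of_le ht.2.le]
    rw [Set.indicator_of_notMem ht, heq, sub_self, sq, zero_mul]

lemma integrable_indicator_Icc_const (a b c : ℝ) :
    Integrable ((Set.Icc a b).indicator fun _ => c) :=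
  (integrable_indicator_iff measurableSet_Icc).2 (integrableOn_const (by simp))

lemma integrable_sq_ramp_sub_ramp {l : ℝ} (hl : 0 ≤ l) (u v : ℝ) :
    Integrable fun t => (ramp l t u - ramp l t v) ^ 2 := by
  have hcont : Continuous fun t => (ramp l t u - ramp l t v) ^ 2 :=
    (continuous_ramp_sub_sq u v).comp (by fun_prop : Continuous fun t => (l, t))
  refine (integrable_indicator_Icc_const (min u v - l) (max u v) (min |u - v| l ^ 2)).mono'
    hcont.aestronglyMeasurable (.of_forall fun t => ?_)
  rw [Real.norm_eq_abs, abs_sq]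
  exact sq_ramp_sub_ramp_le hl t u v

lemma rampDist_nonneg (l u v : ℝ) : 0 ≤ rampDist l u v := integral_nonneg fun _ => sq_nonneg _

lemma rampDist_self (l u : ℝ) : rampDist l u u = 0 := by simp [rampDist]

lemma rampDist_comm (l u v : ℝ) : rampDist l u v = rampDist l v u := by
  simp only [rampDist, sub_sq_comm (ramp l _ u)]

lemma measurable_rampDist (u v : ℝ) : Measurable fun l => rampDist l u v :=
  (continuous_ramp_sub_sq u v).stronglyMeasurable.integral_prod_right.measurable

lemma rampDist_one_zero_le {l : ℝ} (hl : 0 ≤ l) : rampDist l 1 0 ≤ (1 + l) * min 1 l ^ 2 := by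
  calc rampDist l 1 0
      ≤ ∫ t, (Set.Icc (min 1 0 - l) (max 1 0)).indicator (fun _ => min |1 - 0| l ^ 2) t :=
        integral_mono (integrable_sq_ramp_sub_ramp hl 1 0) (integrable_indicator_Icc_const _ _ _)
          fun t => sq_ramp_sub_ramp_le hl t 1 0
    _ = (1 + l) * min 1 l ^ 2 := by
        rw [integral_indicator measurableSet_Icc, setIntegral_const, Real.volume_real_Icc_of_le]
        · simp
        · simpa using by linarith

lemma mul_ramp {r : ℝ} (hr : 0 < r) (l t u v : ℝ) :
    r * ramp (r⁻¹ * l) t u = ramp l (r * t + v) (v + r * u) := by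
  rw [ramp, ramp, mul_max_of_nonneg _ _ hr.le, mul_min_of_nonneg _ _ hr.le, mul_zero,
    mul_inv_cancel_left₀ hr.ne']
  ring_nf

lemma rampDist_add_left {r : ℝ} (hr : 0 < r) (l v : ℝ) :
    rampDist l (v + r) v = r ^ 3 * rampDist (r⁻¹ * l) 1 0 := by
  have hscale (t : ℝ) : r ^ 2 * (ramp (r⁻¹ * l) t 1 - ramp (r⁻¹ * l) t 0) ^ 2 =
      (ramp l (r * t + v) (v + r) - ramp l (r * t + v) v) ^ 2 := by
    rw [← mul_pow, mul_sub, mul_ramp hr l t 1 v, mul_ramp hr l t 0 v, mul_one, mul_zero, add_zero]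
  have hsubst : ∫ t, (ramp l (r * t + v) (v + r) - ramp l (r * t + v) v) ^ 2 =
      r⁻¹ * rampDist l (v + r) v := by
    rw [Measure.integral_comp_mul_left
        (fun t => (ramp l (t + v) (v + r) - ramp l (t + v) v) ^ 2) r,
      integral_add_right_eq_self (fun t => (ramp l t (v + r) - ramp l t v) ^ 2),
      abs_of_pos (inv_pos.2 hr), smul_eq_mul, rampDist]
  rw [rampDist.eq_def (r⁻¹ * l), pow_succ', mul_assoc, ← integral_const_mul]
  simp only [hscale, hsubst]
  rw [mul_inv_cancel_left₀ hr.ne']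

lemma integrableOn_rpow_mul_rampDist_one_zero {α : ℝ} (h₁ : 1 < α) (h₂ : α < 2) :
    IntegrableOn (fun l => l ^ (α - 4) * rampDist l 1 0) (Set.Ioi 0) := by
  have hmeas : Measurable fun l : ℝ => l ^ (α - 4) * rampDist l 1 0 :=
    (by fun_prop : Measurable fun l : ℝ => l ^ (α - 4)).mul (measurable_rampDist 1 0)
  have hbound {l : ℝ} {k : ℝ} (hl : 0 < l) (hk : (1 + l) * min 1 l ^ 2 ≤ 2 * l ^ k) :
      ‖l ^ (α - 4) * rampDist l 1 0‖ ≤ 2 * l ^ (α - 4 + k) := by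
    rw [Real.norm_of_nonneg (mul_nonneg (by positivity) (rampDist_nonneg _ _ _)),
      Real.rpow_add hl, mul_left_comm]
    gcongr
    exact (rampDist_one_zero_le hl.le).trans hk
  rw [← Set.Ioc_union_Ioi_eq_Ioi zero_le_one]
  refine .union ?_ ?_
  · have hdom : IntegrableOn (fun l : ℝ => 2 * l ^ (α - 4 + 2)) (Set.Ioc 0 1) :=
      (intervalIntegral.intervalIntegrable_rpow' (by linarith)).1.const_mul 2
    refine hdom.mono' hmeas.aestronglyMeasurable
      (ae_restrict_of_forall_mem measurableSet_Ioc fun l hl => hbound hl.1 ?_)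
    rw [min_eq_right hl.2, Real.rpow_two]
    gcongr
    linarith [hl.2]
  · have hdom : IntegrableOn (fun l : ℝ => 2 * l ^ (α - 4 + 1)) (Set.Ioi 1) :=
      (integrableOn_Ioi_rpow_of_lt (by linarith) zero_lt_one).const_mul 2
    refine hdom.mono' hmeas.aestronglyMeasurable
      (ae_restrict_of_forall_mem measurableSet_Ioi fun l (hl : 1 < l) =>
        hbound (zero_lt_one.trans hl) ?_)
    rw [min_eq_left hl.le, Real.rpow_one]
    linarith

/-- The constant `c_α` in `∫₀^∞ l^(α-4) rampDist(l, u, v) dl = c_α |u - v|^α`. -/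
noncomputable def rampConst (α : ℝ) : ℝ := ∫ l in Set.Ioi 0, l ^ (α - 4) * rampDist l 1 0

lemma rampConst_nonneg (α : ℝ) : 0 ≤ rampConst α :=
  setIntegral_nonneg measurableSet_Ioi fun l (hl : 0 < l) =>
    mul_nonneg (by positivity) (rampDist_nonneg _ _ _)

lemma rpow_mul_rampDist_add_left {r l : ℝ} (hr : 0 < r) (hl : 0 < l) (α v : ℝ) :
    l ^ (α - 4) * rampDist l (v + r) v =
      r ^ (α - 1) * ((r⁻¹ * l) ^ (α - 4) * rampDist (r⁻¹ * l) 1 0) := by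
  have hpow : r ^ (α - 1) = r ^ (α - 4) * r ^ 3 := by
    rw [← Real.rpow_add_natCast hr.ne']
    ring_nf
  rw [rampDist_add_left hr, Real.mul_rpow (by positivity) hl.le, Real.inv_rpow hr.le, hpow]
  field_simp

lemma rpow_mul_rampDist_add_left_integral {α : ℝ} (h₁ : 1 < α) (h₂ : α < 2) {r : ℝ} (hr : 0 < r)
    (v : ℝ) :
    IntegrableOn (fun l => l ^ (α - 4) * rampDist l (v + r) v) (Set.Ioi 0) ∧
      ∫ l in Set.Ioi 0, l ^ (α - 4) * rampDist l (v + r) v = rampConst α * r ^ α := by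
  set f : ℝ → ℝ := fun m => m ^ (α - 4) * rampDist m 1 0
  have hscale : Set.EqOn (fun l => l ^ (α - 4) * rampDist l (v + r) v)
      (fun l => r ^ (α - 1) * f (r⁻¹ * l)) (Set.Ioi 0) := fun l hl =>
    rpow_mul_rampDist_add_left hr hl α v
  constructor
  · have hf' : IntegrableOn (fun l => f (r⁻¹ * l)) (Set.Ioi 0) := by
      rw [integrableOn_Ioi_comp_mul_left_iff f 0 (inv_pos.2 hr), mul_zero]
      exact integrableOn_rpow_mul_rampDist_one_zero h₁ h₂
    exact IntegrableOn.congr_fun (hf'.const_mul _) hscale.symm measurableSet_Ioi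
  · rw [setIntegral_congr_fun measurableSet_Ioi hscale, integral_const_mul,
      integral_comp_mul_left_Ioi f _ (inv_pos.2 hr), mul_zero, inv_inv, smul_eq_mul, ← mul_assoc,
      ← Real.rpow_add_one hr.ne', sub_add_cancel, mul_comm, rampConst]

lemma rpow_mul_rampDist_integral {α : ℝ} (h₁ : 1 < α) (h₂ : α < 2) (u v : ℝ) :
    IntegrableOn (fun l => l ^ (α - 4) * rampDist l u v) (Set.Ioi 0) ∧
      ∫ l in Set.Ioi 0, l ^ (α - 4) * rampDist l u v = rampConst α * |u - v| ^ α := by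
  wlog huv : v ≤ u generalizing u v
  · simpa only [rampDist_comm _ u v, abs_sub_comm u v] using this v u (le_of_not_ge huv)
  rcases huv.eq_or_lt with rfl | huv
  · simp [rampDist_self, Real.zero_rpow (by linarith : α ≠ 0)]
  · simpa [abs_of_pos (sub_pos.2 huv)] using
      rpow_mul_rampDist_add_left_integral h₁ h₂ (sub_pos.2 huv) v

/-- The ramp of height `θ.1` at `θ.2`, weighted so that Lebesgue measure on `(0, ∞) × ℝ` gives the
ramps of height `l` the density `l ^ (α - 4)` in the mixture of squares. -/
noncomputable def scaledRamp (α : ℝ) (θ : ℝ × ℝ) (u : ℝ) : ℝ :=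
  θ.1 ^ ((α - 4) / 2) * ramp θ.1 θ.2 u

lemma rpow_div_two_sq {l : ℝ} (hl : 0 ≤ l) (a : ℝ) : (l ^ (a / 2)) ^ 2 = l ^ a := by
  rw [← Real.rpow_mul_natCast hl, Nat.cast_ofNat, div_mul_cancel₀ a two_ne_zero]

lemma measurable_uncurry_scaledRamp (α : ℝ) : Measurable (Function.uncurry (scaledRamp α)) := by
  unfold scaledRamp ramp Function.uncurry
  fun_prop

lemma sq_scaledRamp_sub {l : ℝ} (hl : 0 ≤ l) (α t u v : ℝ) :
    (scaledRamp α (l, t) u - scaledRamp α (l, t) v) ^ 2 =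
      l ^ (α - 4) * (ramp l t u - ramp l t v) ^ 2 := by
  rw [scaledRamp, scaledRamp, ← mul_sub, mul_pow, rpow_div_two_sq hl]

lemma abs_scaledRamp_le (α : ℝ) (θ : ℝ × ℝ) (u : ℝ) :
    |scaledRamp α θ u| ≤ |θ.1 ^ ((α - 4) / 2)| * |θ.1| := by
  rw [scaledRamp, abs_mul, abs_of_nonneg (ramp_nonneg _ _ _)]
  gcongr
  exact max_le (abs_nonneg _) ((min_le_left _ _).trans (le_abs_self _))

lemma isFeatureMap_scaledRamp {α : ℝ} (h₁ : 1 < α) (h₂ : α < 2) :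
    IsFeatureMap (scaledRamp α) ((volume.restrict (Set.Ioi 0)).prod volume)
      fun u v => rampConst α * |u - v| ^ α := by
  have hinner (u v : ℝ) : Set.EqOn
      (fun l => ∫ t, (scaledRamp α (l, t) u - scaledRamp α (l, t) v) ^ 2)
      (fun l => l ^ (α - 4) * rampDist l u v) (Set.Ioi 0) := fun l hl => by
    simp only [sq_scaledRamp_sub (le_of_lt hl), integral_const_mul, rampDist]
  have hint (u v : ℝ) : Integrable (fun θ => (scaledRamp α θ u - scaledRamp α θ v) ^ 2)
      ((volume.restrict (Set.Ioi 0)).prod volume) := by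
    have hm := measurable_uncurry_scaledRamp α
    have hmeas : Measurable fun θ => (scaledRamp α θ u - scaledRamp α θ v) ^ 2 :=
      (hm.of_uncurry_right.sub hm.of_uncurry_right).pow_const 2
    rw [integrable_prod_iff hmeas.aestronglyMeasurable]
    refine ⟨ae_restrict_of_forall_mem measurableSet_Ioi fun l hl => ?_, ?_⟩
    · simp only [sq_scaledRamp_sub (le_of_lt hl)]
      exact (integrable_sq_ramp_sub_ramp (le_of_lt hl) u v).const_mul _
    · simp only [norm_pow, Real.norm_eq_abs, sq_abs]
      exact (rpow_mul_rampDist_integral h₁ h₂ u v).1.congr_fun (hinner u v).symm measurableSet_Ioi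
  refine ⟨measurable_uncurry_scaledRamp α, fun θ => ⟨_, abs_scaledRamp_le α θ⟩, hint,
    fun u v => ?_⟩
  rw [integral_prod _ (hint u v), setIntegral_congr_fun measurableSet_Ioi (hinner u v)]
  exact (rpow_mul_rampDist_integral h₁ h₂ u v).2

/-! ### Every Riesz energy controls the Coulomb energy -/

section Comparison

variable {n : ℕ} {x : Fin n → ℝ} {l : ℝ}

lemma fluctuation_const_mul (c : ℝ) (φ : ℝ → ℝ) (x : Fin n → ℝ) :
    fluctuation n (fun u => c * φ u) x = c * fluctuation n φ x := by
  rw [fluctuation, fluctuation, integral_const_mul, ← Finset.mul_sum, mul_sub]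

lemma fluctuation_eq_zero_of_eqOn_const {φ : ℝ → ℝ} {c : ℝ} (hφ : ∀ u ∈ box n, φ u = c)
    (hx : ∀ i, x i ∈ box n) : fluctuation n φ x = 0 := by
  rw [fluctuation, setIntegral_congr_fun (measurableSet_box n) hφ, setIntegral_box_const]
  simp [hφ _ (hx _)]

lemma fluctuation_le_add_of_le {φ ψ η : ℝ → ℝ} (hφ : IntegrableOn φ (box n))
    (hψ : IntegrableOn ψ (box n)) (hη : IntegrableOn η (box n)) (hφψ : ∀ u, φ u ≤ ψ u)
    (hψη : ∀ u, ψ u ≤ φ u + η u) (x : Fin n → ℝ) :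
    fluctuation n φ x ≤ fluctuation n ψ x + ∫ y in box n, η y := by
  have hsum : ∑ i, φ (x i) ≤ ∑ i, ψ (x i) := Finset.sum_le_sum fun i _ => hφψ (x i)
  have hint : ∫ y in box n, ψ y ≤ (∫ y in box n, φ y) + ∫ y in box n, η y := by
    rw [← integral_add hφ hη]
    exact integral_mono hψ (hφ.add hη) hψη
  unfold fluctuation
  linarith

lemma discrepancy_eq_zero_of_notMem_box (hx : ∀ i, x i ∈ box n) {t : ℝ} (ht : t ∉ box n) :
    discrepancy n x t = 0 := by
  rw [box, Set.mem_Icc, not_and_or, not_le, not_le] at ht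
  rcases ht with ht | ht
  · exact fluctuation_eq_zero_of_eqOn_const (c := 1)
      (fun u hu => if_pos (ht.trans_le hu.1)) hx
  · exact fluctuation_eq_zero_of_eqOn_const (c := 0)
      (fun u hu => if_neg (hu.2.trans ht.le).not_gt) hx

lemma integrableOn_box_ramp (n : ℕ) (l t : ℝ) : IntegrableOn (ramp l t) (box n) :=
  integrableOn_box_of_continuous n (by unfold ramp; fun_prop)

lemma integrableOn_box_unitStep (n : ℕ) (t : ℝ) : IntegrableOn (unitStep t) (box n) :=
  .of_bound (by simp [volume_box]) measurable_uncurry_unitStep.of_uncurry_left.aestronglyMeasurable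
    1 (.of_forall (abs_unitStep_le_one t))

lemma setIntegral_box_indicator_Icc_le (n : ℕ) (hl : 0 ≤ l) (t : ℝ) :
    ∫ y in box n, (Set.Icc t (t + l)).indicator (fun _ => l) y ≤ l ^ 2 := by
  calc ∫ y in box n, (Set.Icc t (t + l)).indicator (fun _ => l) y
      ≤ ∫ y, (Set.Icc t (t + l)).indicator (fun _ => l) y :=
        setIntegral_le_integral (integrable_indicator_Icc_const _ _ _)
          (.of_forall fun y => Set.indicator_nonneg (fun _ _ => hl) y)
    _ = l ^ 2 := by
        rw [integral_indicator measurableSet_Icc, setIntegral_const, smul_eq_mul,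
          Real.volume_real_Icc_of_le (by linarith), add_sub_cancel_left, sq]

lemma mul_unitStep_le_ramp (hl : 0 ≤ l) (t u : ℝ) :
    l * unitStep t u ≤ ramp l (t - l) u := by
  unfold unitStep
  split_ifs with h
  · rw [ramp_of_add_le hl (by linarith), mul_one]
  · rw [mul_zero]
    exact ramp_nonneg _ _ _

lemma ramp_le_mul_unitStep (hl : 0 ≤ l) (t u : ℝ) : ramp l t u ≤ l * unitStep t u := by
  unfold unitStep
  split_ifs with h
  · rw [mul_one]
    exact ramp_le hl t u
  · rw [ramp_of_le (not_lt.1 h), mul_zero]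

lemma mul_unitStep_add_le_ramp_add (hl : 0 ≤ l) (t u : ℝ) :
    l * unitStep t u ≤ ramp l t u + (Set.Icc t (t + l)).indicator (fun _ => l) u := by
  have h₀ := ramp_nonneg l t u
  have h₁ := fun h => ramp_of_add_le (t := t) (u := u) hl h
  simp only [unitStep, Set.indicator, Set.mem_Icc]
  split_ifs <;> grind

lemma ramp_le_mul_unitStep_add (hl : 0 ≤ l) (t u : ℝ) :
    ramp l (t - l) u ≤
      l * unitStep t u + (Set.Icc (t - l) (t - l + l)).indicator (fun _ => l) u := by
  have h₀ := ramp_le hl (t - l) u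
  have h₁ := fun h => ramp_of_le (l := l) (t := t - l) (u := u) h
  simp only [unitStep, Set.indicator, Set.mem_Icc]
  split_ifs <;> grind

lemma fluctuation_ramp_le (hl : 0 ≤ l) (x : Fin n → ℝ) (t : ℝ) :
    fluctuation n (ramp l t) x ≤ l * discrepancy n x t + l ^ 2 := by
  have h := fluctuation_le_add_of_le (integrableOn_box_ramp n l t)
    ((integrableOn_box_unitStep n t).const_mul l)
    (integrable_indicator_Icc_const t (t + l) l).integrableOn (ramp_le_mul_unitStep hl t)
    (mul_unitStep_add_le_ramp_add hl t) x
  rw [fluctuation_const_mul] at h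
  exact h.trans (add_le_add_right (setIntegral_box_indicator_Icc_le n hl t) _)

lemma mul_discrepancy_le (hl : 0 ≤ l) (x : Fin n → ℝ) (t : ℝ) :
    l * discrepancy n x t ≤ fluctuation n (ramp l (t - l)) x + l ^ 2 := by
  have h := fluctuation_le_add_of_le ((integrableOn_box_unitStep n t).const_mul l)
    (integrableOn_box_ramp n l (t - l))
    (integrable_indicator_Icc_const (t - l) (t - l + l) l).integrableOn
    (mul_unitStep_le_ramp hl t) (ramp_le_mul_unitStep_add hl t) x
  rw [fluctuation_const_mul] at h
  exact h.trans (add_le_add_right (setIntegral_box_indicator_Icc_le n hl (t - l)) _)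

lemma sq_le_of_sub_le_of_le_add {a b d e : ℝ} (hb : b - e ≤ d) (ha : d ≤ a + e) :
    d ^ 2 ≤ 2 * e ^ 2 + 2 * (a ^ 2 + b ^ 2) := by
  rcases le_total 0 d with hd | hd <;>
    nlinarith [sq_nonneg (a - e), sq_nonneg (b + e), sq_nonneg a, sq_nonneg b]

-- The pointwise error `2 l⁴` is paid on a set of length `n` only, as the discrepancy vanishes off
-- the box.
lemma sq_mul_integral_discrepancy_sq_le (hl : 0 ≤ l) (hx : ∀ i, x i ∈ box n)
    (hramp : Integrable fun t => fluctuation n (ramp l t) x ^ 2) :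
    l ^ 2 * ∫ t, discrepancy n x t ^ 2 ≤
      2 * l ^ 4 * n + 4 * ∫ t, fluctuation n (ramp l t) x ^ 2 := by
  set G : ℝ → ℝ := fun t => fluctuation n (ramp l t) x ^ 2
  have hG (t : ℝ) : 0 ≤ G t := sq_nonneg _
  have hshift : Integrable fun t => G (t - l) := hramp.comp_sub_right l
  have hpt (t : ℝ) : l ^ 2 * discrepancy n x t ^ 2 ≤ 2 * l ^ 4 + 2 * (G (t - l) + G t) := by
    have h := sq_le_of_sub_le_of_le_add (sub_le_iff_le_add.2 (fluctuation_ramp_le hl x t))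
      (mul_discrepancy_le hl x t)
    rwa [mul_pow, ← pow_mul] at h
  have hbox : IntegrableOn (fun t => 2 * (G (t - l) + G t)) (box n) :=
    ((hshift.add hramp).const_mul 2).integrableOn
  calc l ^ 2 * ∫ t, discrepancy n x t ^ 2 = ∫ t in box n, l ^ 2 * discrepancy n x t ^ 2 := by
        rw [integral_const_mul, setIntegral_eq_integral_of_forall_compl_eq_zero fun t ht => by
          rw [discrepancy_eq_zero_of_notMem_box hx ht, sq, zero_mul]]
    _ ≤ ∫ t in box n, (2 * l ^ 4 + 2 * (G (t - l) + G t)) :=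
        integral_mono ((integrable_discrepancy_sq n x).integrableOn.const_mul _)
          ((integrable_const _).add hbox) hpt
    _ = 2 * l ^ 4 * n + ∫ t in box n, 2 * (G (t - l) + G t) := by
        rw [integral_add (integrable_const _) hbox, setIntegral_box_const, mul_comm]
    _ ≤ 2 * l ^ 4 * n + ∫ t, 2 * (G (t - l) + G t) := by
        gcongr 2 * l ^ 4 * n + ?_
        exact setIntegral_le_integral ((hshift.add hramp).const_mul 2)
          (.of_forall fun t => mul_nonneg zero_le_two (add_nonneg (hG _) (hG _)))
    _ = 2 * l ^ 4 * n + 4 * ∫ t, G t := by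
        rw [integral_const_mul, integral_add hshift hramp, integral_sub_right_eq_self G l]
        ring

lemma fluctuation_scaledRamp_sq (hl : 0 ≤ l) (α t : ℝ) (x : Fin n → ℝ) :
    fluctuation n (scaledRamp α (l, t)) x ^ 2 = l ^ (α - 4) * fluctuation n (ramp l t) x ^ 2 := by
  rw [← rpow_div_two_sq hl, ← mul_pow, ← fluctuation_const_mul]
  rfl

lemma rpow_mul_integral_discrepancy_sq_le (hl : 0 < l) (α : ℝ) (hx : ∀ i, x i ∈ box n)
    (hint : Integrable fun t => fluctuation n (scaledRamp α (l, t)) x ^ 2) :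
    l ^ (α - 2) * ∫ t, discrepancy n x t ^ 2 ≤
      2 * n * l ^ α + 4 * ∫ t, fluctuation n (scaledRamp α (l, t)) x ^ 2 := by
  have hpos : 0 < l ^ (α - 4) := Real.rpow_pos_of_pos hl _
  simp only [fluctuation_scaledRamp_sq hl.le, integral_const_mul] at hint ⊢
  have h := mul_le_mul_of_nonneg_left (sq_mul_integral_discrepancy_sq_le hl.le hx
    ((integrable_const_mul_iff hpos.ne'.isUnit _).1 hint)) hpos.le
  have h₂ : l ^ (α - 2) = l ^ (α - 4) * l ^ 2 := by
    rw [← Real.rpow_add_natCast hl.ne']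
    ring_nf
  have h₄ : l ^ α = l ^ (α - 4) * l ^ 4 := by
    rw [← Real.rpow_add_natCast hl.ne']
    ring_nf
  rw [h₂, h₄]
  linarith

lemma setIntegral_Ioc_rpow {r : ℝ} (hr : -1 < r) :
    ∫ l in Set.Ioc (0 : ℝ) 1, l ^ r = 1 / (r + 1) := by
  rw [← intervalIntegral.integral_of_le zero_le_one, integral_rpow (.inl hr), Real.one_rpow,
    Real.zero_rpow (by linarith), sub_zero]

lemma rieszEnergy_neg_one_le {α : ℝ} (h₁ : 1 < α) (h₂ : α < 2) (hx : ∀ i, x i ∈ box n) :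
    1 / (α - 1) * rieszEnergy (-1) n x ≤
      2 / (α + 1) * n + 4 * rampConst α * rieszEnergy (-α) n x := by
  have hΦ := isFeatureMap_scaledRamp h₁ h₂
  have hα : 0 ≤ α := by linarith
  have hint := integrable_fluctuation_sq_of_riesz hα hΦ n x
  set E := ∫ t, discrepancy n x t ^ 2 with hE
  set G : ℝ → ℝ := fun l => ∫ t, fluctuation n (scaledRamp α (l, t)) x ^ 2
  have hG : IntegrableOn G (Set.Ioi 0) := hint.integral_prod_left
  have hsub : Set.Ioc (0 : ℝ) 1 ⊆ Set.Ioi 0 := Set.Ioc_subset_Ioi_self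
  have hrpow {r : ℝ} (hr : -1 < r) : IntegrableOn (fun l : ℝ => l ^ r) (Set.Ioc 0 1) :=
    (intervalIntegral.intervalIntegrable_rpow' hr).1
  have hpow := (hrpow (by linarith : -1 < α)).const_mul (2 * (n : ℝ))
  have hramps : IntegrableOn (fun l => 4 * G l) (Set.Ioc 0 1) := (hG.mono_set hsub).const_mul 4
  have hae : ∀ᵐ l ∂volume.restrict (Set.Ioc 0 1), l ^ (α - 2) * E ≤ 2 * n * l ^ α + 4 * G l := by
    filter_upwards [ae_restrict_of_ae_restrict_of_subset hsub hint.prod_right_ae,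
      ae_restrict_mem measurableSet_Ioc] with l hl hl'
    exact rpow_mul_integral_discrepancy_sq_le hl'.1 α hx hl
  rw [← integral_discrepancy_sq, ← hE]
  calc 1 / (α - 1) * E = ∫ l in Set.Ioc (0 : ℝ) 1, l ^ (α - 2) * E := by
        rw [integral_mul_const, setIntegral_Ioc_rpow (by linarith)]
        ring_nf
    _ ≤ ∫ l in Set.Ioc (0 : ℝ) 1, (2 * n * l ^ α + 4 * G l) :=
        integral_mono_ae ((hrpow (by linarith)).mul_const E) (hpow.add hramps) hae
    _ = 2 / (α + 1) * n + 4 * ∫ l in Set.Ioc (0 : ℝ) 1, G l := by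
        rw [integral_add hpow hramps, integral_const_mul, integral_const_mul,
          setIntegral_Ioc_rpow (by linarith)]
        ring
    _ ≤ 2 / (α + 1) * n + 4 * ∫ l in Set.Ioi (0 : ℝ), G l := by
        gcongr 2 / (α + 1) * n + 4 * ?_
        exact setIntegral_mono_set hG (.of_forall fun l => integral_nonneg fun t => sq_nonneg _)
          hsub.eventuallyLE
    _ = 2 / (α + 1) * n + 4 * rampConst α * rieszEnergy (-α) n x := by
        rw [mul_assoc, ← integral_fluctuation_sq_of_riesz hα hΦ, integral_prod _ hint]

end Comparison

lemma exists_rieszEnergy_neg_one_le {s : ℝ} (hs : -2 < s) (hs' : s ≤ -1) :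
    ∃ A C : ℝ, 0 < A ∧ 0 ≤ C ∧ ∀ (n : ℕ) (x : Fin n → ℝ), (∀ i, x i ∈ box n) →
      rieszEnergy (-1) n x ≤ A * n + C * rieszEnergy s n x := by
  rcases hs'.eq_or_lt with rfl | hs'
  · exact ⟨1, 1, one_pos, zero_le_one, fun n x _ => by simp⟩
  obtain ⟨α, rfl⟩ : ∃ α, s = -α := ⟨-s, (neg_neg s).symm⟩
  have hα : 0 < α - 1 := by linarith
  have hα' : 0 < α + 1 := by linarith
  refine ⟨(α - 1) * (2 / (α + 1)), (α - 1) * (4 * rampConst α), by positivity,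
    mul_nonneg hα.le (mul_nonneg zero_le_four (rampConst_nonneg α)), fun n x hx => ?_⟩
  have h := rieszEnergy_neg_one_le (by linarith) (by linarith) hx
  rw [one_div, inv_mul_le_iff₀ hα] at h
  exact h.trans_eq (by ring)

/-! ### The one-dimensional Coulomb gas -/

/-- The squared distance from `x` to the centered lattice under the monotone matching. -/
noncomputable def transportCost (n : ℕ) (x : Fin n → ℝ) : ℝ :=
  ∑ j, (x (Tuple.sort x j) - latticeY n j) ^ 2

lemma setIntegral_box_abs_sub {n : ℕ} {a : ℝ} (ha : a ∈ box n) :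
    ∫ y in box n, |a - y| = a ^ 2 + n ^ 2 / 4 := by
  have hpiece (b : ℝ) : ∫ y in Set.uIoc a b, |a - y| = (a - b) ^ 2 / 2 := by
    simpa [abs_sub_comm, one_add_one_eq_two] using integral_pow_abs_sub_uIoc (a := a) (b := b) 1
  have hint (s t : ℝ) : IntegrableOn (fun y => |a - y|) (Set.Ioc s t) :=
    (by fun_prop : Continuous fun y => |a - y|).integrableOn_Ioc
  rw [box, integral_Icc_eq_integral_Ioc, ← Set.Ioc_union_Ioc_eq_Ioc ha.1 ha.2,
    setIntegral_union (Set.Ioc_disjoint_Ioc_of_le le_rfl) measurableSet_Ioc (hint _ _) (hint _ _),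
    ← Set.uIoc_of_le ha.2, ← Set.uIoc_of_ge ha.1, hpiece, hpiece]
  ring

lemma setIntegral_box_sq (n : ℕ) : ∫ u in box n, u ^ 2 = (n : ℝ) ^ 3 / 12 := by
  have hle : -(n : ℝ) / 2 ≤ n / 2 := by linarith [n.cast_nonneg (α := ℝ)]
  rw [box, integral_Icc_eq_integral_Ioc, ← intervalIntegral.integral_of_le hle, integral_pow]
  ring

lemma setIntegral_box_prod_abs_sub (n : ℕ) :
    ∫ p in box n ×ˢ box n, |p.1 - p.2| = (n : ℝ) ^ 3 / 3 := by
  rw [Measure.volume_eq_prod,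
    setIntegral_prod _ (integrableOn_box_prod_of_continuous n (by fun_prop)),
    setIntegral_congr_fun (measurableSet_box n) fun _ => setIntegral_box_abs_sub,
    integral_add (integrableOn_box_of_continuous n (by fun_prop)) (integrable_const _),
    setIntegral_box_sq, setIntegral_box_const]
  ring

lemma sum_sum_abs_sub_of_monotone {n : ℕ} {z : Fin n → ℝ} (hz : Monotone z) :
    ∑ i, ∑ j, |z i - z j| = 4 * ∑ i, latticeY n i * z i := by
  set ε : Fin n → Fin n → ℝ := fun i j => (if j ≤ i then 1 else 0) - if i ≤ j then 1 else 0
  have hε {i j : Fin n} (h : i < j) : ε i j = -1 ∧ ε j i = 1 := by simp [ε, h.le, h.not_ge]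
  have habs (i j : Fin n) : |z i - z j| = ε i j * z i + ε j i * z j := by
    rcases lt_trichotomy i j with h | rfl | h
    · rw [abs_of_nonpos (sub_nonpos.2 (hz h.le))]
      rw [(hε h).1, (hε h).2]
      ring
    · simp [ε]
    · rw [abs_of_nonneg (sub_nonneg.2 (hz h.le))]
      rw [(hε h).1, (hε h).2]
      ring
  have hrow (i : Fin n) : ∑ j, ε i j = 2 * latticeY n i := by
    have hi : ((n - i : ℕ) : ℝ) = n - i := Nat.cast_sub i.is_lt.le
    simp only [ε, Finset.sum_sub_distrib, Finset.sum_boole, Finset.filter_ge_eq_Iic,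
      Finset.filter_le_eq_Ici, Fin.card_Iic, Fin.card_Ici, hi, latticeY]
    push_cast
    ring
  simp only [habs, Finset.sum_add_distrib]
  rw [Finset.sum_comm (f := fun i j => ε j i * z j)]
  simp only [← Finset.sum_mul, hrow, Finset.mul_sum, ← Finset.sum_add_distrib]
  exact Finset.sum_congr rfl fun i _ => by ring

lemma sum_range_succ_sub_sq (k : ℕ) (c : ℝ) :
    ∑ j ∈ Finset.range k, ((j : ℝ) + 1 - c) ^ 2 =
      k * (k + 1) * (2 * k + 1) / 6 - c * (k * (k + 1)) + k * c ^ 2 := by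
  induction k with
  | zero => simp
  | succ k ih =>
    rw [Finset.sum_range_succ, ih]
    push_cast
    ring

lemma sum_latticeY_sq (n : ℕ) : ∑ j, latticeY n j ^ 2 = ((n : ℝ) ^ 3 - n) / 12 := by
  simp only [latticeY]
  rw [Fin.sum_univ_eq_sum_range fun j => ((j : ℝ) + 1 - (n + 1) / 2) ^ 2, sum_range_succ_sub_sq]
  ring

lemma transportCost_eq (n : ℕ) (x : Fin n → ℝ) :
    transportCost n x =
      ∑ i, x i ^ 2 - (1 / 2) * (∑ i, ∑ j, |x i - x j|) + ((n : ℝ) ^ 3 - n) / 12 := by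
  set σ := Tuple.sort x
  have hsq : ∑ j, x (σ j) ^ 2 = ∑ i, x i ^ 2 := Equiv.sum_comp σ fun i => x i ^ 2
  have hpairs : ∑ i, ∑ j, |x (σ i) - x (σ j)| = ∑ i, ∑ j, |x i - x j| := by
    rw [← Equiv.sum_comp σ fun i => ∑ j, |x i - x j|]
    exact Finset.sum_congr rfl fun i _ => Equiv.sum_comp σ fun j => |x (σ i) - x j|
  have hcross : ∑ i, ∑ j, |x i - x j| = 4 * ∑ j, latticeY n j * x (σ j) :=
    hpairs.symm.trans (sum_sum_abs_sub_of_monotone (Tuple.monotone_sort x))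
  rw [← sum_latticeY_sq, ← hsq, hcross, transportCost, Finset.mul_sum, Finset.mul_sum,
    ← Finset.sum_sub_distrib, ← Finset.sum_add_distrib]
  exact Finset.sum_congr rfl fun j _ => by ring

lemma rieszEnergy_neg_one_eq {n : ℕ} {x : Fin n → ℝ} (hx : ∀ i, x i ∈ box n) :
    rieszEnergy (-1) n x = transportCost n x + n / 12 := by
  have hkernel (u v : ℝ) : rieszKernel (-1) (u - v) = -|u - v| := by
    rw [rieszKernel, neg_neg, Real.rpow_one]
  simp only [rieszEnergy, neutralEnergy, hkernel, integral_neg, setIntegral_box_prod_abs_sub,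
    setIntegral_box_abs_sub (hx _), Finset.sum_neg_distrib, Finset.sum_add_distrib,
    Finset.sum_const, Finset.card_univ, Fintype.card_fin, nsmul_eq_mul, transportCost_eq]
  ring

/-! ### A lower bound on the partition function -/

section ProductLaw

variable {n : ℕ} {μ : Fin n → Measure ℝ} [∀ i, IsProbabilityMeasure (μ i)]

lemma map_eval_pair_pi {ι : Type*} [Fintype ι] {X : ι → Type*} [∀ i, MeasurableSpace (X i)]
    (μ : ∀ i, Measure (X i)) [∀ i, IsProbabilityMeasure (μ i)] {i j : ι} (hij : i ≠ j) :
    (Measure.pi μ).map (fun x => (x i, x j)) = (μ i).prod (μ j) := by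
  have hindep := (ProbabilityTheory.iIndepFun_pi (μ := μ) (X := fun _ => id)
    fun _ => aemeasurable_id).indepFun hij
  have hlaw := (ProbabilityTheory.indepFun_iff_map_prod_eq_prod_map_map
    (measurePreserving_eval μ i).aemeasurable (measurePreserving_eval μ j).aemeasurable).1 hindep
  rwa [(measurePreserving_eval μ i).map_eq, (measurePreserving_eval μ j).map_eq] at hlaw

lemma integrable_prod_of_sum_eq_restrict_box (hμ : Measure.sum μ = volume.restrict (box n))
    {f : ℝ × ℝ → ℝ} (hf : Continuous f) (i j : Fin n) : Integrable f ((μ i).prod (μ j)) := by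
  have hbox := integrableOn_box_prod_of_continuous n hf
  rw [IntegrableOn, restrict_box_prod, ← hμ] at hbox
  exact hbox.mono_measure <| Measure.prod_mono (Measure.le_sum μ i) (Measure.le_sum μ j)

lemma integrable_pi_of_sum_eq_restrict_box (hμ : Measure.sum μ = volume.restrict (box n))
    {f : (Fin n → ℝ) → ℝ} (hf : Continuous f) : Integrable f (Measure.pi μ) := by
  have hmem (i : Fin n) : ∀ᵐ x ∂Measure.pi μ, x i ∈ box n :=
    (measurePreserving_eval μ i).quasiMeasurePreserving.ae <|
      (hμ ▸ Measure.le_sum μ i).absolutelyContinuous.ae_le (ae_restrict_mem (measurableSet_box n))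
  have hmem_pi : ∀ᵐ x ∂Measure.pi μ, x ∈ Set.univ.pi fun _ : Fin n => box n := by
    simpa only [Set.mem_univ_pi] using ae_all_iff.2 hmem
  rw [← Measure.restrict_eq_self_of_ae_mem hmem_pi]
  exact hf.continuousOn.integrableOn_compact (isCompact_univ_pi fun _ => isCompact_box n)

lemma integral_setIntegral_box_pi (hμ : Measure.sum μ = volume.restrict (box n))
    {K : ℝ → ℝ → ℝ} (hK : Continuous (Function.uncurry K)) (i : Fin n) :
    ∫ x, (∫ y in box n, K (x i) y) ∂Measure.pi μ =
      ∑ j, ∫ p, K p.1 p.2 ∂(μ i).prod (μ j) := by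
  have hpotential : Continuous fun u => ∫ y in box n, K u y :=
    continuous_parametric_integral_of_continuous hK (isCompact_box n)
  have hint (j : Fin n) (_ : j ∈ Finset.univ) := integrable_prod_of_sum_eq_restrict_box hμ hK i j
  refine (integral_comp_eval (μ := μ) (f := fun u => ∫ y in box n, K u y)
    hpotential.aestronglyMeasurable).trans ?_
  rw [← hμ, ← integral_prod (fun p => K p.1 p.2), Measure.prod_sum_right, Measure.sum_fintype]
  · exact integral_finsetSum_measure hint
  · rw [Measure.prod_sum_right, Measure.sum_fintype]
    exact integrable_finsetSum_measure.2 hint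

lemma integral_comp_eval_pair_pi {K : ℝ → ℝ → ℝ} (hK : Continuous (Function.uncurry K))
    (i j : Fin n) :
    ∫ x, K (x i) (x j) ∂Measure.pi μ = (∫ p, K p.1 p.2 ∂(μ i).prod (μ j)) +
      if i = j then (∫ u, K u u ∂μ i) - ∫ p, K p.1 p.2 ∂(μ i).prod (μ i) else 0 := by
  split_ifs with h
  · subst h
    rw [add_sub_cancel]
    exact integral_comp_eval (μ := μ) (f := fun u => K u u)
      (hK.comp (by fun_prop : Continuous fun u => (u, u))).aestronglyMeasurable
  · rw [add_zero, ← integral_map (φ := fun x : Fin n → ℝ => (x i, x j))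
      (f := fun p => K p.1 p.2) (by fun_prop) hK.aestronglyMeasurable, map_eval_pair_pi μ h]

-- Only the diagonal pairs tell the points `xᵢ` from the background: all the other terms cancel.
lemma integral_neutralEnergy_pi (hμ : Measure.sum μ = volume.restrict (box n))
    {K : ℝ → ℝ → ℝ} (hK : Continuous (Function.uncurry K)) :
    ∫ x, neutralEnergy n K x ∂Measure.pi μ =
      (1 / 2) * ∑ i, ((∫ u, K u u ∂μ i) - ∫ p, K p.1 p.2 ∂(μ i).prod (μ i)) := by
  have hpair_int (i j : Fin n) : Integrable (fun x : Fin n → ℝ => K (x i) (x j)) (Measure.pi μ) :=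
    integrable_pi_of_sum_eq_restrict_box hμ
      (hK.comp (by fun_prop : Continuous fun x : Fin n → ℝ => (x i, x j)))
  have hpotential_int (i : Fin n) :
      Integrable (fun x : Fin n → ℝ => ∫ y in box n, K (x i) y) (Measure.pi μ) :=
    integrable_pi_of_sum_eq_restrict_box hμ
      ((continuous_parametric_integral_of_continuous hK (isCompact_box n)).comp
        (continuous_apply i))
  have htotal : ∫ p in box n ×ˢ box n, K p.1 p.2 =
      ∑ i, ∑ j, ∫ p, K p.1 p.2 ∂(μ i).prod (μ j) := by
    rw [restrict_box_prod, ← hμ, Measure.prod_sum, Measure.sum_fintype, integral_finsetSum_measure,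
      Fintype.sum_prod_type]
    exact fun ij _ => integrable_prod_of_sum_eq_restrict_box hμ hK ij.1 ij.2
  have hself : Integrable (fun x => (1 / 2) * ∑ i, ∑ j, K (x i) (x j)) (Measure.pi μ) :=
    (integrable_finsetSum _ fun i _ => integrable_finsetSum _ fun j _ => hpair_int i j).const_mul _
  have hmixed : Integrable (fun x => ∑ i, ∫ y in box n, K (x i) y) (Measure.pi μ) :=
    integrable_finsetSum _ fun i _ => hpotential_int i
  have hdiff : Integrable (fun x => (1 / 2) * (∑ i, ∑ j, K (x i) (x j)) -
      ∑ i, ∫ y in box n, K (x i) y) (Measure.pi μ) := hself.sub hmixed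
  simp only [neutralEnergy]
  rw [integral_add hdiff (integrable_const _), integral_sub hself hmixed, integral_const_mul,
    integral_finsetSum _ fun i _ => hpotential_int i,
    integral_finsetSum _ fun i _ => integrable_finsetSum _ fun j _ => hpair_int i j]
  simp only [integral_finsetSum _ fun j _ => hpair_int _ j,
    integral_comp_eval_pair_pi hK, htotal, integral_setIntegral_box_pi hμ hK,
    Finset.sum_add_distrib, Finset.sum_ite_eq, Finset.mem_univ, if_true, integral_const,
    probReal_univ, one_smul]
  ring

end ProductLaw

/-- The `j`-th cell of the partition of `□ₙ`, up to its left endpoint, into unit intervals. -/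
def cell (n : ℕ) (j : Fin n) : Set ℝ := Set.Ioc (-(n : ℝ) / 2 + j) (-(n : ℝ) / 2 + (j + 1))

lemma measurableSet_cell (n : ℕ) (j : Fin n) : MeasurableSet (cell n j) := measurableSet_Ioc

instance isProbabilityMeasure_restrict_cell (n : ℕ) (j : Fin n) :
    IsProbabilityMeasure (volume.restrict (cell n j)) :=
  ⟨by simp [cell]⟩

lemma monotone_cell_endpoint (n : ℕ) : Monotone fun k : ℕ => -(n : ℝ) / 2 + k :=
  fun _ _ h => by simpa using h

lemma pairwise_disjoint_cell (n : ℕ) : Pairwise (Function.onFun Disjoint (cell n)) := by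
  intro i j hij
  simpa [Function.onFun, cell] using
    (monotone_cell_endpoint n).pairwise_disjoint_on_Ioc_succ (Fin.val_injective.ne hij)

lemma iUnion_cell (n : ℕ) : ⋃ j, cell n j = Set.Ioc (-(n : ℝ) / 2) (n / 2) := by
  have h := (monotone_cell_endpoint n).biUnion_Ico_Ioc_map_succ 0 n
  simp only [Nat.succ_eq_succ, Nat.succ_eq_add_one, Nat.cast_add_one, Nat.cast_zero, add_zero] at h
  rw [show (n : ℝ) / 2 = -n / 2 + n by ring, ← h]
  ext t
  simp [cell, Fin.exists_iff]

lemma sum_restrict_cell (n : ℕ) (σ : Equiv.Perm (Fin n)) :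
    Measure.sum (fun i => (volume.restrict (cell n (σ i)) : Measure ℝ)) =
      volume.restrict (box n) := by
  refine (Measure.sum_comp_equiv σ fun j => volume.restrict (cell n j)).trans ?_
  rw [← Measure.restrict_iUnion (pairwise_disjoint_cell n) (measurableSet_cell n), iUnion_cell, box,
    restrict_Ioc_eq_restrict_Icc]

lemma volume_restrict_pi_cell (n : ℕ) (σ : Equiv.Perm (Fin n)) :
    (volume.restrict (Set.univ.pi fun i => cell n (σ i)) : Measure (Fin n → ℝ)) =
      Measure.pi fun i => volume.restrict (cell n (σ i)) := by
  rw [volume_pi, Measure.restrict_pi_pi]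

lemma neg_one_le_rieszKernel {s t : ℝ} (hs : s ≤ 0) (ht : |t| ≤ 1) : -1 ≤ rieszKernel s t :=
  neg_le_neg (rpow_le_one (abs_nonneg t) ht (neg_nonneg.2 hs))

lemma setIntegral_pi_cell_rieszEnergy_le {s : ℝ} (hs : s < 0) (n : ℕ) (σ : Equiv.Perm (Fin n)) :
    ∫ x in Set.univ.pi fun i => cell n (σ i), rieszEnergy s n x ≤ n / 2 := by
  have hK := continuous_uncurry_rieszKernel_sub hs.le
  have hzero : rieszKernel s 0 = 0 := by
    rw [rieszKernel, abs_zero, zero_rpow (neg_ne_zero.2 hs.ne), neg_zero]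
  have hdist {j : Fin n} {u v : ℝ} (hu : u ∈ cell n j) (hv : v ∈ cell n j) : |u - v| ≤ 1 :=
    abs_le.2 ⟨by linarith [hu.1, hv.2], by linarith [hu.2, hv.1]⟩
  have hcell (j : Fin n) : -1 ≤ ∫ p, rieszKernel s (p.1 - p.2)
      ∂(volume.restrict (cell n j)).prod (volume.restrict (cell n j)) := by
    have hint : Integrable (fun p : ℝ × ℝ => rieszKernel s (p.1 - p.2))
        ((volume.restrict (cell n j)).prod (volume.restrict (cell n j))) :=
      integrable_prod_of_sum_eq_restrict_box (sum_restrict_cell n 1) hK j j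
    have hbound : ∀ᵐ p ∂(volume.restrict (cell n j)).prod (volume.restrict (cell n j)),
        -1 ≤ rieszKernel s (p.1 - p.2) := by
      rw [Measure.prod_restrict]
      exact ae_restrict_of_forall_mem ((measurableSet_cell n j).prod (measurableSet_cell n j))
        fun p hp => neg_one_le_rieszKernel hs.le (hdist hp.1 hp.2)
    simpa using integral_mono_ae (integrable_const (-1)) hint hbound
  simp only [volume_restrict_pi_cell, rieszEnergy,
    integral_neutralEnergy_pi (sum_restrict_cell n σ) hK, sub_self, hzero, integral_zero, zero_sub]
  have hsum := Finset.sum_le_sum fun i (_ : i ∈ Finset.univ) => neg_le.1 (hcell (σ i))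
  simp only [Finset.sum_const, Finset.card_univ, Fintype.card_fin, nsmul_one] at hsum
  linarith

lemma exp_le_setIntegral_pi_cell {s β : ℝ} (hs : s < 0) (hβ : 0 ≤ β) (n : ℕ)
    (σ : Equiv.Perm (Fin n)) :
    exp (-β * (n / 2)) ≤
      ∫ x in Set.univ.pi fun i => cell n (σ i), exp (-β * rieszEnergy s n x) := by
  have hcont := continuous_rieszEnergy hs.le n
  have hmean := setIntegral_pi_cell_rieszEnergy_le hs n σ
  rw [volume_restrict_pi_cell] at hmean ⊢
  have hint {f : (Fin n → ℝ) → ℝ} (hf : Continuous f) :=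
    integrable_pi_of_sum_eq_restrict_box (sum_restrict_cell n σ) hf
  calc
    exp (-β * (n / 2)) ≤ exp (∫ x, -β * rieszEnergy s n x ∂Measure.pi _) := by
      rw [integral_const_mul]
      exact exp_le_exp.2 (mul_le_mul_of_nonpos_left hmean (neg_nonpos.2 hβ))
    _ ≤ _ := convexOn_exp.map_integral_le continuousOn_exp isClosed_univ
      (.of_forall fun _ => Set.mem_univ _) (hint (by fun_prop)) (hint (by fun_prop))

lemma cell_subset_box (n : ℕ) (j : Fin n) : cell n j ⊆ box n :=
  (Set.subset_iUnion (cell n) j).trans (iUnion_cell n ▸ Set.Ioc_subset_Icc_self)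

lemma pairwise_disjoint_pi_cell (n : ℕ) :
    Pairwise (Function.onFun Disjoint
      fun σ : Equiv.Perm (Fin n) => Set.univ.pi fun i => cell n (σ i)) := by
  intro σ τ hne
  obtain ⟨i, hi⟩ := DFunLike.ne_iff.1 hne
  exact Set.disjoint_univ_pi.2 ⟨i, pairwise_disjoint_cell n hi⟩

lemma integrableOn_pi_box_of_continuous (n : ℕ) {f : (Fin n → ℝ) → ℝ} (hf : Continuous f) :
    IntegrableOn f (Set.univ.pi fun _ => box n) :=
  hf.continuousOn.integrableOn_compact (isCompact_univ_pi fun _ => isCompact_box n)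

lemma factorial_mul_exp_le_setIntegral_pi_box {s β : ℝ} (hs : s < 0) (hβ : 0 ≤ β) (n : ℕ) :
    n.factorial * exp (-β * (n / 2)) ≤
      ∫ x in Set.univ.pi fun _ : Fin n => box n, exp (-β * rieszEnergy s n x) := by
  set w : (Fin n → ℝ) → ℝ := fun x => exp (-β * rieszEnergy s n x)
  set S : Equiv.Perm (Fin n) → Set (Fin n → ℝ) := fun σ => Set.univ.pi fun i => cell n (σ i)
  have hcont := continuous_rieszEnergy hs.le n
  have hw : IntegrableOn w (Set.univ.pi fun _ => box n) :=
    integrableOn_pi_box_of_continuous n (by fun_prop)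
  have hmeas (σ) : MeasurableSet (S σ) := .univ_pi fun i => measurableSet_cell n (σ i)
  have hsub (σ) : S σ ⊆ Set.univ.pi fun _ => box n :=
    Set.pi_mono fun i _ => cell_subset_box n (σ i)
  have hunion : ∫ x in ⋃ σ, S σ, w x = ∑ σ, ∫ x in S σ, w x :=
    integral_iUnion_fintype hmeas (pairwise_disjoint_pi_cell n) fun σ => hw.mono_set (hsub σ)
  calc
    n.factorial * exp (-β * (n / 2)) = ∑ _ : Equiv.Perm (Fin n), exp (-β * (n / 2)) := by
      simp [Fintype.card_perm]
    _ ≤ ∑ σ, ∫ x in S σ, w x :=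
      Finset.sum_le_sum fun σ _ => exp_le_setIntegral_pi_cell hs hβ n σ
    _ = ∫ x in ⋃ σ, S σ, w x := hunion.symm
    _ ≤ _ := setIntegral_mono_set hw (.of_forall fun _ => (exp_pos _).le)
      (.of_forall (Set.iUnion_subset hsub))

lemma pow_div_setIntegral_pi_box_le_exp {s β : ℝ} (hs : s < 0) (hβ : 0 ≤ β) (n : ℕ) :
    (n : ℝ) ^ n / ∫ x in Set.univ.pi fun _ : Fin n => box n, exp (-β * rieszEnergy s n x) ≤
      exp ((1 + β / 2) * n) := by
  calc
    _ ≤ (n : ℝ) ^ n / (n.factorial * exp (-β * (n / 2))) := by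
      gcongr
      exact factorial_mul_exp_le_setIntegral_pi_box hs hβ n
    _ = (n : ℝ) ^ n / n.factorial * exp (β * (n / 2)) := by
      rw [neg_mul, exp_neg]
      field_simp
    _ ≤ exp n * exp (β * (n / 2)) := by
      gcongr
      exact pow_div_factorial_le_exp _ n.cast_nonneg n
    _ = _ := by
      rw [← exp_add]
      ring_nf

/-! ### The Gibbs measure -/

/-- The finite-volume Riesz Gibbs measure `P_n^{(s,β)}`. -/
noncomputable def gibbsMeasure (s β : ℝ) (n : ℕ) : Measure (Fin n → ℝ) :=
  (volume.restrict (Set.univ.pi fun _ => box n)).tilted fun x => -β * Hgen n (rieszKernel s) x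

lemma tilted_add_const {Ω : Type*} [MeasurableSpace Ω] (μ : Measure Ω) (f : Ω → ℝ) (c : ℝ) :
    μ.tilted (fun x => f x + c) = μ.tilted f := by
  simp only [Measure.tilted, exp_add, integral_mul_const,
    mul_div_mul_right _ _ (exp_ne_zero c)]

lemma gibbsMeasure_eq_tilted_rieszEnergy {s : ℝ} (hs : s ≤ 0) (β : ℝ) (n : ℕ) :
    gibbsMeasure s β n = (volume.restrict (Set.univ.pi fun _ => box n)).tilted
      fun x => -β * rieszEnergy s n x := by
  obtain ⟨c, hc⟩ := exists_Hgen_eq_neutralEnergy_add n (continuous_rieszKernel hs)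
  simp only [gibbsMeasure, hc, mul_add, tilted_add_const, rieszEnergy]

-- Jensen's inequality for `exp` under the tilted law, where `exp f` integrates to the ratio.
lemma integral_tilted_neg_le_log {Ω : Type*} [MeasurableSpace Ω] {μ : Measure Ω}
    [IsFiniteMeasure μ] [NeZero μ] {f : Ω → ℝ} (hexp : Integrable (fun x => exp (-f x)) μ)
    (hf : Integrable f (μ.tilted fun x => -f x)) :
    ∫ x, f x ∂μ.tilted (fun x => -f x) ≤ log (μ.real Set.univ / ∫ x, exp (-f x) ∂μ) := by
  have := isProbabilityMeasure_tilted hexp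
  have hexp_int : Integrable (fun x => exp (f x)) (μ.tilted fun x => -f x) := by
    rw [integrable_tilted_iff hexp]
    simp [← exp_add]
  have hratio : ∫ x, exp (f x) ∂μ.tilted (fun x => -f x) =
      μ.real Set.univ / ∫ x, exp (-f x) ∂μ := by
    rw [integral_exp_tilted]
    simp
  rw [← hratio, le_log_iff_exp_le (integral_exp_pos hexp_int)]
  exact convexOn_exp.map_integral_le continuousOn_exp isClosed_univ
    (.of_forall fun _ => Set.mem_univ _) hf hexp_int

lemma measureReal_restrict_pi_box (n : ℕ) :
    ((volume : Measure (Fin n → ℝ)).restrict (Set.univ.pi fun _ => box n)).real Set.univ =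
      (n : ℝ) ^ n := by
  simp [Measure.real, volume_pi_pi, volume_box]

instance isFiniteMeasure_restrict_pi_box (n : ℕ) :
    IsFiniteMeasure ((volume : Measure (Fin n → ℝ)).restrict (Set.univ.pi fun _ => box n)) :=
  ⟨by simp [volume_pi_pi, volume_box]⟩

instance neZero_restrict_pi_box (n : ℕ) :
    NeZero ((volume : Measure (Fin n → ℝ)).restrict (Set.univ.pi fun _ => box n)) := by
  refine ⟨fun h => ?_⟩
  have hvol : 0 = (n : ℝ) ^ n := by simpa [h] using measureReal_restrict_pi_box n
  exact Nat.pow_self_pos.ne (by exact_mod_cast hvol)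

lemma integrable_gibbsMeasure_of_continuous {s : ℝ} (hs : s ≤ 0) (β : ℝ) (n : ℕ)
    {f : (Fin n → ℝ) → ℝ} (hf : Continuous f) : Integrable f (gibbsMeasure s β n) := by
  have hcont := continuous_rieszEnergy hs n
  rw [gibbsMeasure_eq_tilted_rieszEnergy hs, integrable_tilted_iff]
  · exact integrableOn_pi_box_of_continuous n (by fun_prop)
  · exact integrableOn_pi_box_of_continuous n (by fun_prop)

lemma isProbabilityMeasure_gibbsMeasure {s : ℝ} (hs : s ≤ 0) (β : ℝ) (n : ℕ) :
    IsProbabilityMeasure (gibbsMeasure s β n) := by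
  have hcont := continuous_rieszEnergy hs n
  rw [gibbsMeasure_eq_tilted_rieszEnergy hs]
  exact isProbabilityMeasure_tilted (integrableOn_pi_box_of_continuous n (by fun_prop))

lemma integral_rieszEnergy_gibbsMeasure_le {s β : ℝ} (hs : s < 0) (hβ : 0 < β) (n : ℕ) :
    ∫ x, rieszEnergy s n x ∂gibbsMeasure s β n ≤ (1 / β + 1 / 2) * n := by
  have hcont := continuous_rieszEnergy hs.le n
  have hint := integrable_gibbsMeasure_of_continuous hs.le β n
    (by fun_prop : Continuous fun x => β * rieszEnergy s n x)
  have hlog : ∫ x, β * rieszEnergy s n x ∂gibbsMeasure s β n ≤ (1 + β / 2) * n := by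
    rw [gibbsMeasure_eq_tilted_rieszEnergy hs.le] at hint ⊢
    simp only [neg_mul] at hint ⊢
    have hexp : IntegrableOn (fun x : Fin n → ℝ => exp (-(β * rieszEnergy s n x)))
        (Set.univ.pi fun _ => box n) := integrableOn_pi_box_of_continuous n (by fun_prop)
    refine (integral_tilted_neg_le_log hexp hint).trans ?_
    rw [measureReal_restrict_pi_box, log_le_iff_le_exp]
    · simpa using pow_div_setIntegral_pi_box_le_exp hs hβ.le n
    · exact div_pos (by exact_mod_cast Nat.pow_self_pos) (integral_exp_pos hexp)
  rw [integral_const_mul] at hlog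
  calc
    _ = β * (∫ x, rieszEnergy s n x ∂gibbsMeasure s β n) / β := by field_simp
    _ ≤ (1 + β / 2) * n / β := by gcongr
    _ = _ := by field_simp

lemma inv_mul_setIntegral_eq_integral_gibbsMeasure (s β : ℝ) {n : ℕ} (hn : n ≠ 0)
    (f : (Fin n → ℝ) → ℝ) :
    ((n : ℝ) ^ n * Zpart s β n)⁻¹ *
        ∫ x in Set.univ.pi fun _ => box n, f x * exp (-β * Hgen n (rieszKernel s) x) =
      ∫ x, f x ∂gibbsMeasure s β n := by
  rw [Zpart, mul_inv_cancel_left₀ (by positivity), gibbsMeasure, integral_tilted,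
    ← integral_const_mul]
  congr with x
  rw [smul_eq_mul]
  ring

lemma ae_mem_box_gibbsMeasure (s β : ℝ) (n : ℕ) :
    ∀ᵐ x ∂gibbsMeasure s β n, ∀ i, x i ∈ box n :=
  (tilted_absolutelyContinuous _ _).ae_le <|
    ae_restrict_of_forall_mem (.univ_pi fun _ => measurableSet_box n) fun _ hx i => hx i trivial

/-- **Finite-volume L² transport bound.** For every `s ∈ (−2,−1]` and
`β > 0` there is `C = C(s,β) > 0` such that for every `n ≥ 1` the expected squared
transport cost from the Gibbs configuration to the centered unit lattice under the
finite-volume Gibbs measure `P_n^{(s,β)}` (density `exp(−β H_n^{(s)})/(nⁿ Z_n^{(s,β)})`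
w.r.t. Lebesgue on `(□ₙ)ⁿ`) is at most linear in the volume:
`E_{P_n^{(s,β)}}[∑_j (x_{(j)} − y_j)²] ≤ C n`. -/
theorem finite_volume_L2_transport (s β : ℝ) (hs : -2 < s) (hs' : s ≤ -1) (hβ : 0 < β) :
    ∃ C : ℝ, 0 < C ∧ ∀ n : ℕ, 1 ≤ n →
      (((n : ℝ) ^ n * Zpart s β n)⁻¹ *
        ∫ x in Set.univ.pi (fun _ : Fin n => box n),
          (∑ j : Fin n, (x (Tuple.sort x j) - latticeY n j) ^ 2) *
            Real.exp (-β * Hgen n (rieszKernel s) x))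
        ≤ C * n := by
  obtain ⟨A, C, hA, hC, hcoulomb⟩ := exists_rieszEnergy_neg_one_le hs hs'
  refine ⟨A + C * (1 / β + 1 / 2), by positivity, fun n hn => ?_⟩
  have hs₀ : s < 0 := hs'.trans_lt neg_one_lt_zero
  have hint := integrable_gibbsMeasure_of_continuous hs₀.le β n (continuous_rieszEnergy hs₀.le n)
  have htransport : ∀ᵐ x ∂gibbsMeasure s β n,
      transportCost n x ≤ A * n + C * rieszEnergy s n x := by
    filter_upwards [ae_mem_box_gibbsMeasure s β n] with x hx
    linarith [hcoulomb n x hx, rieszEnergy_neg_one_eq hx, n.cast_nonneg (α := ℝ)]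
  have := isProbabilityMeasure_gibbsMeasure hs₀.le β n
  rw [inv_mul_setIntegral_eq_integral_gibbsMeasure s β (by lia)]
  calc
    _ ≤ ∫ x, (A * n + C * rieszEnergy s n x) ∂gibbsMeasure s β n :=
      integral_mono_of_nonneg (.of_forall fun _ => Finset.sum_nonneg fun _ _ => sq_nonneg _)
        ((integrable_const _).add (hint.const_mul C)) htransport
    _ = A * n + C * ∫ x, rieszEnergy s n x ∂gibbsMeasure s β n := by
      rw [integral_add (integrable_const _) (hint.const_mul C), integral_const,
        integral_const_mul, probReal_univ, one_smul]
    _ ≤ A * n + C * ((1 / β + 1 / 2) * n) := by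
      gcongr
      exact integral_rieszEnergy_gibbsMeasure_le hs₀ hβ n
    _ = (A + C * (1 / β + 1 / 2)) * n := by ring
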